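/- Let p = (x, ξ₀,…,ξ_{L−1}) ∈ C_{h⃗} be nondegenerate and assume τ₋(p) and τ₊(p) are also nondegenerate. Then the diagonal entries of the gauge-transformed monodromy matrix act on the Baxter vector by L̃_{h⃗;11}(x, ξ₀,…,ξ_{L−1})·|p⟩ = Δ₋(p)·|τ₋(p)⟩ and L̃_{h⃗;22}(x, ξ₀,…,ξ_{L−1})·|p⟩ = Δ₊(p)·|τ₊(p)⟩, where Δ₋(p) = ∏_{j=0}^{L−1}(d_j − xξ_{j+1}c_j) and Δ₊(p) = ∏_{j=0}^{L−1} ξ_j(a_jd_j − x²b_jc_j)/(ξ_{j+1}a_j − xb_j). -/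

import Mathlib

/-!
Write `L̃_j = A_{ξ_j} L_{h_j}(x) A_{ξ_{j+1}}⁻¹` for the local factor. On the `j`-th Baxter factor
the recursion defining `|p_j⟩` says exactly that the lower left entry vanishes,
`(L̃_j)₂₁ |p_j⟩ = 0` (`gaugeLoc_one_zero_mulVec`). Modulo this entry the diagonal ones reduce to
`(L̃_j)₁₁ = d_j - x ξ_{j+1} c_j Z` and `(L̃_j)₂₂ = a_j Y + x ξ_j c_j Z`; the images of `|p_j⟩` under
them satisfy the recursions of the local factors at `τ₋ p` and `τ₊ p`, so they are multiples of
those, with the factor read off from the component at `0` (`gaugeLoc_zero_zero_mulVec`,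
`gaugeLoc_one_one_mulVec`).

Since the factors act on distinct tensor slots, an induction on the list of slots shows that on
`|p⟩` the monodromy is upper triangular and its diagonal entries act slot by slot
(`prod_mulVec_baxVec`).
-/

open Matrix Polynomial

noncomputable section

/-- The operator `Z` on `ℂ^N`: `(Zv)_k = ω^k v_k`. -/
def Zop (N : ℕ) (ω : ℂ) : Matrix (ZMod N) (ZMod N) ℂ :=
  Matrix.diagonal fun k => ω ^ k.val

/-- The operator `X` on `ℂ^N`: `(Xv)_k = v_{k-1}`. -/
def Xop (N : ℕ) : Matrix (ZMod N) (ZMod N) ℂ :=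
  Matrix.of fun k k' => if k' = k - 1 then 1 else 0

/-- The operator `Y := Z * X` on `ℂ^N`. -/
def Yop (N : ℕ) [NeZero N] (ω : ℂ) : Matrix (ZMod N) (ZMod N) ℂ :=
  Zop N ω * Xop N

/-- The `L`-operator `L_h(x)`, a 2×2 matrix of operators on `ℂ^N`, for
`h = (a,b,c,d) ∈ ℂ⁴`: first row `(aY, xbX)`, second row `(xcZ, d·I)`. -/
def Lop (N : ℕ) [NeZero N] (ω : ℂ) (h : ℂ × ℂ × ℂ × ℂ) (x : ℂ) :
    Matrix (Fin 2) (Fin 2) (Matrix (ZMod N) (ZMod N) ℂ) :=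
  Matrix.of
    ![![h.1 • Yop N ω, (x * h.2.1) • Xop N],
      ![(x * h.2.2.1) • Zop N ω, h.2.2.2 • (1 : Matrix (ZMod N) (ZMod N) ℂ)]]

/-- Embedding of an operator on `ℂ^N` as an operator on `⊗^L ℂ^N` acting on the `j`-th
tensor slot. -/
def emb (N L : ℕ) [NeZero N] [NeZero L] (j : ZMod L) (A : Matrix (ZMod N) (ZMod N) ℂ) :
    Matrix (ZMod L → ZMod N) (ZMod L → ZMod N) ℂ :=
  Matrix.of fun k k' =>
    A (k j) (k' j) * ∏ i ∈ Finset.univ.erase j, (if k i = k' i then (1 : ℂ) else 0)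

/-- The monodromy matrix `L_{h⃗}(x) = L_{h₀}(x) ⋯ L_{h_{L-1}}(x)`, a 2×2 matrix of
operators on `⊗^L ℂ^N`, the operator entries of the `j`-th factor acting on the
`j`-th tensor slot. -/
def mono (N L : ℕ) [NeZero N] [NeZero L] (ω : ℂ) (h : ZMod L → ℂ × ℂ × ℂ × ℂ) (x : ℂ) :
    Matrix (Fin 2) (Fin 2) (Matrix (ZMod L → ZMod N) (ZMod L → ZMod N) ℂ) :=
  ((List.finRange L).map fun j =>
    (Lop N ω (h ((j : ℕ) : ZMod L)) x).map (emb N L ((j : ℕ) : ZMod L))).prod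

/-- The transfer matrix `T_{h⃗}(x)`: the trace of the monodromy matrix over the 2×2
auxiliary indices. -/
def transfer (N L : ℕ) [NeZero N] [NeZero L] (ω : ℂ) (h : ZMod L → ℂ × ℂ × ℂ × ℂ)
    (x : ℂ) : Matrix (ZMod L → ZMod N) (ZMod L → ZMod N) ℂ :=
  mono N L ω h x 0 0 + mono N L ω h x 1 1

/-- The spectral curve `C_{h⃗}`: the set of points `(x, ξ₀,…,ξ_{L−1})` with
`ξ_j^N (ξ_{j+1}^N x^N c_j^N − d_j^N) = (−1)^N (ξ_{j+1}^N a_j^N − x^N b_j^N)` for all `j`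
(cyclically). -/
def onCurve (N L : ℕ) [NeZero L] (a b c d : ZMod L → ℂ) (x : ℂ) (ξ : ZMod L → ℂ) : Prop :=
  ∀ j : ZMod L,
    ξ j ^ N * (ξ (j + 1) ^ N * x ^ N * c j ^ N - d j ^ N) =
      (-1 : ℂ) ^ N * (ξ (j + 1) ^ N * a j ^ N - x ^ N * b j ^ N)

/-- A point of the spectral curve is nondegenerate if `ξ_j ≠ 0`,
`ξ_{j+1}a_j − xb_j ≠ 0` and `ξ_{j+1}xc_jω^m − d_j ≠ 0` for all `j` and all `m ∈ ℤ/N`. -/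
def nondeg (N L : ℕ) [NeZero L] (ω : ℂ) (a b c d : ZMod L → ℂ) (x : ℂ)
    (ξ : ZMod L → ℂ) : Prop :=
  ∀ j : ZMod L, ξ j ≠ 0 ∧ ξ (j + 1) * a j - x * b j ≠ 0 ∧
    ∀ m : ZMod N, ξ (j + 1) * x * c j * ω ^ m.val - d j ≠ 0

/-- `v j` is the `j`-th local factor `|p_j⟩` of the Baxter vector at
`p = (x, ξ₀,…,ξ_{L−1})`: the vector with `⟨0|p_j⟩ = 1` and
`⟨m|p_j⟩ = ⟨m−1|p_j⟩·(ξ_{j+1}a_jω^m − xb_j)/(−ξ_j(ξ_{j+1}xc_jω^m − d_j))` for all `m`. -/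
def isBaxterFamily (N L : ℕ) [NeZero L] (ω : ℂ) (a b c d : ZMod L → ℂ) (x : ℂ)
    (ξ : ZMod L → ℂ) (v : ZMod L → ZMod N → ℂ) : Prop :=
  ∀ j : ZMod L, v j 0 = 1 ∧ ∀ m : ZMod N,
    v j m = v j (m - 1) *
      ((ξ (j + 1) * a j * ω ^ m.val - x * b j) /
        (-(ξ j) * (ξ (j + 1) * x * c j * ω ^ m.val - d j)))

/-- The Baxter vector `|p⟩ = |p₀⟩ ⊗ ⋯ ⊗ |p_{L−1}⟩ ∈ ⊗^L ℂ^N` assembled from the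
local factors `v j = |p_j⟩`. -/
def baxVec (N L : ℕ) [NeZero L] (v : ZMod L → ZMod N → ℂ) : (ZMod L → ZMod N) → ℂ :=
  fun k => ∏ j : ZMod L, v j (k j)

/-- The gauge matrix `A_ξ` with rows `(1, ξ−1)` and `(1, ξ)`. -/
def gaugeA (ξ : ℂ) : Matrix (Fin 2) (Fin 2) ℂ :=
  Matrix.of ![![1, ξ - 1], ![1, ξ]]

/-- A scalar 2×2 matrix viewed as a 2×2 matrix of operators on `⊗^L ℂ^N`. -/
def scal (N L : ℕ) [NeZero N] [NeZero L] (A : Matrix (Fin 2) (Fin 2) ℂ) :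
    Matrix (Fin 2) (Fin 2) (Matrix (ZMod L → ZMod N) (ZMod L → ZMod N) ℂ) :=
  A.map fun z => z • (1 : Matrix (ZMod L → ZMod N) (ZMod L → ZMod N) ℂ)

/-- The gauge-transformed monodromy matrix
`L̃_{h⃗}(x,ξ) = (A_{ξ₀}L_{h₀}(x)A_{ξ₁}⁻¹)⋯(A_{ξ_{L−1}}L_{h_{L−1}}(x)A_{ξ₀}⁻¹)`. -/
def gaugeMono (N L : ℕ) [NeZero N] [NeZero L] (ω : ℂ) (h : ZMod L → ℂ × ℂ × ℂ × ℂ)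
    (x : ℂ) (ξ : ZMod L → ℂ) :
    Matrix (Fin 2) (Fin 2) (Matrix (ZMod L → ZMod N) (ZMod L → ZMod N) ℂ) :=
  ((List.finRange L).map fun j =>
    scal N L (gaugeA (ξ ((j : ℕ) : ZMod L))) *
      (Lop N ω (h ((j : ℕ) : ZMod L)) x).map (emb N L ((j : ℕ) : ZMod L)) *
      scal N L (gaugeA (ξ (((j : ℕ) : ZMod L) + 1)))⁻¹).prod

/-- `Δ₋(p) = ∏_j (d_j − x ξ_{j+1} c_j)`. -/
def DeltaMinus (L : ℕ) [NeZero L] (c d : ZMod L → ℂ) (x : ℂ) (ξ : ZMod L → ℂ) : ℂ :=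
  ∏ j : ZMod L, (d j - x * ξ (j + 1) * c j)

/-- `Δ₊(p) = ∏_j ξ_j (a_j d_j − x² b_j c_j)/(ξ_{j+1} a_j − x b_j)`. -/
def DeltaPlus (L : ℕ) [NeZero L] (a b c d : ZMod L → ℂ) (x : ℂ) (ξ : ZMod L → ℂ) : ℂ :=
  ∏ j : ZMod L, ξ j * (a j * d j - x ^ 2 * b j * c j) / (ξ (j + 1) * a j - x * b j)

/-! ### Operators on tensor slots -/

section TensorSlots

variable {N L : ℕ} [NeZero N] [NeZero L]

lemma emb_add (j : ZMod L) (A B : Matrix (ZMod N) (ZMod N) ℂ) :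
    emb N L j (A + B) = emb N L j A + emb N L j B := by
  ext k k'; simp [emb, add_mul]

lemma emb_smul (j : ZMod L) (z : ℂ) (A : Matrix (ZMod N) (ZMod N) ℂ) :
    emb N L j (z • A) = z • emb N L j A := by
  ext k k'; simp [emb, mul_assoc]

/-- An operator on slot `j` acts on a pure tensor through its `j`-th factor. -/
lemma emb_mulVec_baxVec (j : ZMod L) (A : Matrix (ZMod N) (ZMod N) ℂ)
    (u : ZMod L → ZMod N → ℂ) :
    (emb N L j A).mulVec (baxVec N L u) =
      baxVec N L (Function.update u j (A.mulVec (u j))) := by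
  classical
  ext k
  change ∑ k' : ZMod L → ZMod N, (A (k j) (k' j) *
      ∏ i ∈ Finset.univ.erase j, (if k i = k' i then (1 : ℂ) else 0)) * ∏ i, u i (k' i) =
    ∏ i, Function.update u j (A.mulVec (u j)) i (k i)
  rw [← Finset.mul_prod_erase Finset.univ _ (Finset.mem_univ j), Function.update_self,
    show A.mulVec (u j) (k j) = ∑ t, A (k j) t * u j t from rfl, Finset.sum_mul]
  -- Only the multi-indices that agree with `k` away from `j` contribute.
  symm
  refine Finset.sum_of_injOn (fun t => Function.update k j t) ?_ ?_ ?_ ?_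
  · intro s _ t _ hst
    simpa using congrFun hst j
  · intro t _; simp
  · intro k' _ hk'
    have : ∃ i, i ≠ j ∧ k i ≠ k' i := by
      by_contra! h
      refine hk' ⟨k' j, by simp, ?_⟩
      funext i
      by_cases hi : i = j
      · subst hi; simp
      · simp [Function.update_of_ne hi, h i hi]
    obtain ⟨i, hi, hne⟩ := this
    rw [Finset.prod_eq_zero (i := i) (by simp [hi]) (by simp [hne])]
    simp
  · intro t _
    rw [← Finset.mul_prod_erase Finset.univ _ (Finset.mem_univ j)]
    have h1 : ∏ i ∈ Finset.univ.erase j,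
        (if k i = Function.update k j t i then (1 : ℂ) else 0) = 1 := by
      refine Finset.prod_eq_one fun i hi => ?_
      simp [Function.update_of_ne (Finset.ne_of_mem_erase hi)]
    have h2 : ∏ i ∈ Finset.univ.erase j, u i (Function.update k j t i) =
        ∏ i ∈ Finset.univ.erase j, Function.update u j (A.mulVec (u j)) i (k i) := by
      refine Finset.prod_congr rfl fun i hi => ?_
      simp [Function.update_of_ne (Finset.ne_of_mem_erase hi)]
    rw [h1, h2]
    simp only [Function.update_self]
    ring

omit [NeZero N] in
lemma baxVec_eq_zero {u : ZMod L → ZMod N → ℂ} {j : ZMod L} (h : u j = 0) :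
    baxVec N L u = 0 := by
  ext k
  exact Finset.prod_eq_zero (Finset.mem_univ j) (by simp [h])

omit [NeZero N] in
lemma baxVec_smul (δ : ZMod L → ℂ) (w : ZMod L → ZMod N → ℂ) :
    baxVec N L (fun j => δ j • w j) = (∏ j, δ j) • baxVec N L w := by
  ext k
  simp [baxVec, Finset.prod_mul_distrib]

/-- If the lower left entries `G j 1 0` kill the vectors `v j`, an ordered product of 2×2 matrices
`G j` acting on distinct slots is upper triangular on the pure tensor of the `v j`, and its diagonal
entries act factorwise. The slots outside the list carry arbitrary vectors, which is what makes the
induction work: the last factor of the product may change its own slot arbitrarily before the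
remaining ones act. -/
lemma prod_mulVec_baxVec (G : ZMod L → Matrix (Fin 2) (Fin 2) (Matrix (ZMod N) (ZMod N) ℂ))
    (v : ZMod L → ZMod N → ℂ) (hG : ∀ j, (G j 1 0).mulVec (v j) = 0) (l : List (ZMod L))
    (hl : l.Nodup) (u : ZMod L → ZMod N → ℂ) (hu : ∀ j ∈ l, u j = v j) :
    ((l.map fun j => (G j).map (emb N L j)).prod 1 0).mulVec (baxVec N L u) =
      (0 : (ZMod L → ZMod N) → ℂ) ∧
    ∀ r, ((l.map fun j => (G j).map (emb N L j)).prod r r).mulVec (baxVec N L u) =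
      baxVec N L (fun j => if j ∈ l then (G j r r).mulVec (v j) else u j) := by
  induction l using List.reverseRecOn generalizing u with
  | nil => simp
  | append_singleton l j ih =>
    obtain ⟨hl1, hj⟩ : l.Nodup ∧ j ∉ l := by
      have := List.nodup_append.1 hl
      refine ⟨this.1, fun h => this.2.2 j h j (by simp) rfl⟩
    have huj : u j = v j := hu j (by simp)
    have key := fun y : ZMod N → ℂ => ih hl1 (Function.update u j y) (fun i hi => by
      rw [Function.update_of_ne (ne_of_mem_of_not_mem hi hj), hu i (by simp [hi])])
    have kill : (emb N L j (G j 1 0)).mulVec (baxVec N L u) = 0 := by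
      rw [emb_mulVec_baxVec, huj, hG]
      exact baxVec_eq_zero (j := j) (by simp)
    have merge : ∀ r, baxVec N L (fun i => if i ∈ l then (G i r r).mulVec (v i)
          else Function.update u j ((G j r r).mulVec (u j)) i) =
        baxVec N L (fun i => if i ∈ l ++ [j] then (G i r r).mulVec (v i) else u i) := by
      intro r
      congr 1
      funext i
      by_cases hi : i = j
      · subst hi; simp [hj, huj]
      · simp [hi]
    simp only [List.map_append, List.map_cons, List.map_nil, List.prod_append, List.prod_cons,
      List.prod_nil, mul_one, Matrix.mul_apply, Fin.sum_univ_two, Matrix.map_apply,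
      Matrix.add_mulVec, ← Matrix.mulVec_mulVec, kill, Matrix.mulVec_zero, add_zero]
    refine ⟨?_, fun r => ?_⟩
    · rw [emb_mulVec_baxVec, (key _).1]
    · fin_cases r
      · simp only [Fin.zero_eta, Fin.isValue, kill, Matrix.mulVec_zero, add_zero]
        rw [emb_mulVec_baxVec, (key _).2, merge]
      · simp only [Fin.mk_one, Fin.isValue]
        rw [emb_mulVec_baxVec, emb_mulVec_baxVec, (key _).1, (key _).2, merge, zero_add]

end TensorSlots

/-! ### The local factors -/

section LocalOperators

variable {N : ℕ} [NeZero N]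

/-- The gauge-transformed local `L`-operator `A_ξ L_h(x) A_{ξ'}⁻¹` on `ℂ^N`, with the scalar gauge
matrices acting entrywise by `•`. -/
def gaugeLoc (N : ℕ) [NeZero N] (ω : ℂ) (h : ℂ × ℂ × ℂ × ℂ) (x ξ ξ' : ℂ) :
    Matrix (Fin 2) (Fin 2) (Matrix (ZMod N) (ZMod N) ℂ) :=
  Matrix.of fun r s => ∑ l, (gaugeA ξ')⁻¹ l s • ∑ k, gaugeA ξ r k • Lop N ω h x k l

lemma gaugeA_inv (ξ : ℂ) : (gaugeA ξ)⁻¹ = Matrix.of ![![ξ, 1 - ξ], ![-1, 1]] := by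
  refine Matrix.inv_eq_right_inv ?_
  ext i j
  fin_cases i <;> fin_cases j <;> simp [gaugeA, Matrix.mul_apply]

lemma gaugeLoc_apply (ω : ℂ) (h : ℂ × ℂ × ℂ × ℂ) (x ξ ξ' : ℂ) (r s : Fin 2) :
    gaugeLoc N ω h x ξ ξ' r s =
      ∑ l, !![ξ', 1 - ξ'; -1, 1] l s • ∑ k, !![1, ξ - 1; 1, ξ] r k • Lop N ω h x k l := by
  rw [gaugeLoc, gaugeA_inv]
  rfl

lemma gaugeFactor_eq_map_gaugeLoc {L : ℕ} [NeZero L] (ω : ℂ) (h : ℂ × ℂ × ℂ × ℂ) (x ξ ξ' : ℂ)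
    (j : ZMod L) :
    scal N L (gaugeA ξ) * (Lop N ω h x).map (emb N L j) * scal N L (gaugeA ξ')⁻¹ =
      (gaugeLoc N ω h x ξ ξ').map (emb N L j) := by
  ext1 r s
  simp only [Matrix.mul_apply, Fin.sum_univ_two, scal, Matrix.map_apply, gaugeLoc, Matrix.of_apply,
    emb_add, emb_smul, smul_mul_assoc, mul_smul_comm, one_mul, mul_one]

lemma Xop_mulVec (v : ZMod N → ℂ) (m : ZMod N) : (Xop N).mulVec v m = v (m - 1) := by
  simp [Xop, Matrix.mulVec, dotProduct]

lemma Zop_mulVec (ω : ℂ) (v : ZMod N → ℂ) (m : ZMod N) :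
    (Zop N ω).mulVec v m = ω ^ m.val * v m := by
  simp [Zop, Matrix.mulVec_diagonal]

lemma Yop_mulVec (ω : ℂ) (v : ZMod N → ℂ) (m : ZMod N) :
    (Yop N ω).mulVec v m = ω ^ m.val * v (m - 1) := by
  rw [Yop, ← Matrix.mulVec_mulVec, Zop_mulVec, Xop_mulVec]

lemma pow_val_eq_mul_pow_val_sub_one {ω : ℂ} (hω : ω ^ N = 1) (m : ZMod N) :
    ω ^ m.val = ω * ω ^ (m - 1).val := by
  conv_lhs => rw [← sub_add_cancel m 1]
  rw [ZMod.val_add, ZMod.val_one_eq_one_mod, Nat.add_mod_mod, ← pow_eq_pow_mod _ hω, pow_succ']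

/-- Two functions on `ℤ/N` with the same first order recursion are proportional. -/
lemma eq_smul_of_recursion {f g r : ZMod N → ℂ} {δ : ℂ} (h0 : f 0 = δ) (g0 : g 0 = 1)
    (hf : ∀ m, f m = f (m - 1) * r m) (hg : ∀ m, g m = g (m - 1) * r m) : f = δ • g := by
  have key : ∀ n : ℕ, f (n : ZMod N) = δ * g (n : ZMod N) := by
    intro n
    induction n with
    | zero => simp [h0, g0]
    | succ n ih =>
      rw [hf, hg]
      push_cast
      rw [add_sub_cancel_right, ih, mul_assoc]
  funext m
  simpa using key m.val

variable {ω q a b c d x ξ ξ' : ℂ} {v w : ZMod N → ℂ}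

/-- The recursion of `|p_j⟩` is the vanishing of the lower left entry on it. -/
lemma gaugeLoc_one_zero_mulVec (hξ : ξ ≠ 0)
    (hd : ∀ m : ZMod N, ξ' * x * c * ω ^ m.val - d ≠ 0)
    (hv : ∀ m : ZMod N, v m = v (m - 1) *
      ((ξ' * a * ω ^ m.val - x * b) / (-ξ * (ξ' * x * c * ω ^ m.val - d)))) :
    (gaugeLoc N ω (a, b, c, d) x ξ ξ' 1 0).mulVec v = 0 := by
  funext m
  have h1 := hv m
  have h2 := hd m
  simp only [gaugeLoc_apply, Lop, Matrix.of_apply, Fin.sum_univ_two,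
    Matrix.add_mulVec, Matrix.smul_mulVec, Pi.add_apply, Pi.smul_apply, Xop_mulVec, Yop_mulVec,
    Zop_mulVec, Matrix.one_mulVec, smul_eq_mul, Matrix.cons_val_zero, Matrix.cons_val_one,
    Matrix.cons_val_fin_one, Pi.zero_apply]
  rw [mul_div_assoc', eq_div_iff (mul_ne_zero (neg_ne_zero.2 hξ) h2)] at h1
  linear_combination -h1

lemma gaugeLoc_zero_zero_mulVec (hω : ω ^ N = 1) (hq : q ^ 2 = ω) (hq0 : q ≠ 0) (hξ : ξ ≠ 0)
    (hd : ∀ m : ZMod N, ξ' * x * c * ω ^ m.val - d ≠ 0) (hv0 : v 0 = 1)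
    (hv : ∀ m : ZMod N, v m = v (m - 1) *
      ((ξ' * a * ω ^ m.val - x * b) / (-ξ * (ξ' * x * c * ω ^ m.val - d))))
    (hw0 : w 0 = 1)
    (hw : ∀ m : ZMod N, w m = w (m - 1) *
      ((q⁻¹ * ξ' * a * ω ^ m.val - q⁻¹ * x * b) /
        (-(q⁻¹ * ξ) * (q⁻¹ * ξ' * (q⁻¹ * x) * c * ω ^ m.val - d)))) :
    (gaugeLoc N ω (a, b, c, d) x ξ ξ' 0 0).mulVec v = (d - x * ξ' * c) • w := by
  have hform : ∀ m, (gaugeLoc N ω (a, b, c, d) x ξ ξ' 0 0).mulVec v m =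
      (d - ξ' * x * c * ω ^ m.val) * v m := by
    intro m
    have h := congrFun (gaugeLoc_one_zero_mulVec hξ hd hv) m
    simp only [gaugeLoc_apply, Lop, Matrix.of_apply, Fin.sum_univ_two,
      Matrix.add_mulVec, Matrix.smul_mulVec, Pi.add_apply, Pi.smul_apply, Xop_mulVec, Yop_mulVec,
      Zop_mulVec, Matrix.one_mulVec, smul_eq_mul, Matrix.cons_val_zero, Matrix.cons_val_one,
      Matrix.cons_val_fin_one, Pi.zero_apply] at h ⊢
    linear_combination h
  refine eq_smul_of_recursion ?_ hw0 (fun m => ?_) hw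
  · rw [hform, hv0, ZMod.val_zero]; ring
  · rw [hform, hform, hv m]
    have e := pow_val_eq_mul_pow_val_sub_one hω m
    have h1 := hd m
    have h2 := hd (m - 1)
    have h3 : q⁻¹ * ξ' * (q⁻¹ * x) * c * ω ^ m.val - d = ξ' * x * c * ω ^ (m - 1).val - d := by
      rw [e, ← hq]; field_simp
    rw [h3]
    field_simp
    ring

lemma gaugeLoc_one_one_mulVec (hω : ω ^ N = 1) (hq : q ^ 2 = ω) (hq0 : q ≠ 0) (hξ : ξ ≠ 0)
    (hab : ξ' * a - x * b ≠ 0)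
    (hd : ∀ m : ZMod N, ξ' * x * c * ω ^ m.val - d ≠ 0) (hv0 : v 0 = 1)
    (hv : ∀ m : ZMod N, v m = v (m - 1) *
      ((ξ' * a * ω ^ m.val - x * b) / (-ξ * (ξ' * x * c * ω ^ m.val - d))))
    (hw0 : w 0 = 1)
    (hw : ∀ m : ZMod N, w m = w (m - 1) *
      ((q⁻¹ * ξ' * a * ω ^ m.val - q * x * b) /
        (-(q⁻¹ * ξ) * (q⁻¹ * ξ' * (q * x) * c * ω ^ m.val - d)))) :
    (gaugeLoc N ω (a, b, c, d) x ξ ξ' 1 1).mulVec v =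
      (ξ * (a * d - x ^ 2 * b * c) / (ξ' * a - x * b)) • w := by
  -- Expressed through `v (m - 1)`, since `ξ' a ω^m - x b` may vanish for `m ≠ 0`.
  have hform : ∀ m, (gaugeLoc N ω (a, b, c, d) x ξ ξ' 1 1).mulVec v m =
      ω ^ m.val * v (m - 1) * (x ^ 2 * b * c - a * d) / (ξ' * x * c * ω ^ m.val - d) := by
    intro m
    have h := congrFun (gaugeLoc_one_zero_mulVec hξ hd hv) m
    have h1 := hd m
    have h2 : ω ^ m.val * v (m - 1) * (x ^ 2 * b * c - a * d) / (ξ' * x * c * ω ^ m.val - d) =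
        ω ^ m.val * (a * v (m - 1) + ξ * x * c * v m) := by
      have h0 := hv m
      rw [mul_div_assoc', eq_div_iff (mul_ne_zero (neg_ne_zero.2 hξ) h1)] at h0
      rw [div_eq_iff h1]
      linear_combination (ω ^ m.val * x * c) * h0
    rw [h2]
    simp only [gaugeLoc_apply, Lop, Matrix.of_apply, Fin.sum_univ_two,
      Matrix.add_mulVec, Matrix.smul_mulVec, Pi.add_apply, Pi.smul_apply, Xop_mulVec, Yop_mulVec,
      Zop_mulVec, Matrix.one_mulVec, smul_eq_mul, Matrix.cons_val_zero, Matrix.cons_val_one,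
      Matrix.cons_val_fin_one, Pi.zero_apply] at h ⊢
    linear_combination -h
  refine eq_smul_of_recursion ?_ hw0 (fun m => ?_) hw
  · have h0 := hv 0
    have h1 := hd 0
    rw [hform]
    simp only [ZMod.val_zero, pow_zero, mul_one, one_mul, hv0] at h0 h1 ⊢
    rw [mul_div_assoc', eq_div_iff (mul_ne_zero (neg_ne_zero.2 hξ) h1)] at h0
    rw [div_eq_div_iff h1 hab]
    linear_combination -(x ^ 2 * b * c - a * d) * h0
  · rw [hform, hform, hv (m - 1)]
    have e := pow_val_eq_mul_pow_val_sub_one hω m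
    have h1 := hd m
    have h2 := hd (m - 1)
    have h3 : q⁻¹ * ξ' * (q * x) * c * ω ^ m.val - d = ξ' * x * c * ω ^ m.val - d := by
      field_simp
    have h4 : (q⁻¹ * ξ' * a * ω ^ m.val - q * x * b) /
        (-(q⁻¹ * ξ) * (ξ' * x * c * ω ^ m.val - d)) =
        ω * (ξ' * a * ω ^ (m - 1).val - x * b) / (-ξ * (ξ' * x * c * ω ^ m.val - d)) := by
      have h5 : q⁻¹ * ξ' * a * ω ^ m.val - q * x * b =
          q⁻¹ * (ω * (ξ' * a * ω ^ (m - 1).val - x * b)) := by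
        rw [e, ← hq]; field_simp
      rw [h5, ← mul_neg, mul_assoc q⁻¹, mul_div_mul_left _ _ (inv_ne_zero hq0), neg_mul]
    rw [h3, h4]
    -- The two denominators become atoms so that `ω ^ m.val` is rewritten in the numerators only.
    generalize ξ' * x * c * ω ^ m.val - d = D at h1 ⊢
    generalize ξ' * x * c * ω ^ (m - 1).val - d = E at h2 ⊢
    rw [e]
    field_simp

end LocalOperators

/-! ### The monodromy -/

/-- at a nondegenerate point `p` of the spectral curve whose images
`τ₋(p) = (q⁻¹x, q⁻¹ξ)` and `τ₊(p) = (qx, q⁻¹ξ)` are also nondegenerate, the diagonal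
entries of the gauge-transformed monodromy matrix act on the Baxter vector by
`L̃₁₁|p⟩ = Δ₋(p)|τ₋p⟩` and `L̃₂₂|p⟩ = Δ₊(p)|τ₊p⟩`. -/
theorem gauge_diagonal_action_on_baxter (M L : ℕ) [NeZero L] (hM : 1 ≤ M) (ω : ℂ)
    (hω : IsPrimitiveRoot ω (2 * M + 1)) (q : ℂ) (hq : q = ω ^ (M + 1))
    (a b c d : ZMod L → ℂ) (x : ℂ) (ξ : ZMod L → ℂ)
    (hp : onCurve (2 * M + 1) L a b c d x ξ)
    (hnd : nondeg (2 * M + 1) L ω a b c d x ξ)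
    (hndm : nondeg (2 * M + 1) L ω a b c d (q⁻¹ * x) (fun j => q⁻¹ * ξ j))
    (hndp : nondeg (2 * M + 1) L ω a b c d (q * x) (fun j => q⁻¹ * ξ j))
    (v wm wp : ZMod L → ZMod (2 * M + 1) → ℂ)
    (hv : isBaxterFamily (2 * M + 1) L ω a b c d x ξ v)
    (hwm : isBaxterFamily (2 * M + 1) L ω a b c d (q⁻¹ * x) (fun j => q⁻¹ * ξ j) wm)
    (hwp : isBaxterFamily (2 * M + 1) L ω a b c d (q * x) (fun j => q⁻¹ * ξ j) wp) :
    (gaugeMono (2 * M + 1) L ω (fun j => (a j, b j, c j, d j)) x ξ 0 0).mulVec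
        (baxVec (2 * M + 1) L v) =
      DeltaMinus L c d x ξ • baxVec (2 * M + 1) L wm ∧
    (gaugeMono (2 * M + 1) L ω (fun j => (a j, b j, c j, d j)) x ξ 1 1).mulVec
        (baxVec (2 * M + 1) L v) =
      DeltaPlus L a b c d x ξ • baxVec (2 * M + 1) L wp := by
  have hω1 : ω ^ (2 * M + 1) = 1 := hω.pow_eq_one
  have hq2 : q ^ 2 = ω := by
    rw [hq, ← pow_mul, show (M + 1) * 2 = (2 * M + 1) + 1 by ring, pow_succ, hω1, one_mul]
  have hq0 : q ≠ 0 := by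
    rw [hq]; exact pow_ne_zero _ (hω.ne_zero (by omega))
  set G : ZMod L → Matrix (Fin 2) (Fin 2) (Matrix (ZMod (2 * M + 1)) (ZMod (2 * M + 1)) ℂ) :=
    fun j => gaugeLoc (2 * M + 1) ω (a j, b j, c j, d j) x (ξ j) (ξ (j + 1)) with hGdef
  set l : List (ZMod L) := (List.finRange L).map fun j : Fin L => ((j : ℕ) : ZMod L) with hldef
  have hl : l.Nodup := by
    refine (List.nodup_finRange L).map fun i j hij => ?_
    have := congrArg ZMod.val hij
    simp only [ZMod.val_natCast, Nat.mod_eq_of_lt i.2, Nat.mod_eq_of_lt j.2] at this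
    exact Fin.ext this
  have hmem : ∀ j, j ∈ l := fun j =>
    List.mem_map.2 ⟨⟨j.val, ZMod.val_lt j⟩, List.mem_finRange _, by simp⟩
  -- The index list in `gaugeMono` is `List.finRange L` cast to `List ℕ` by a monadic lift, hence the
  -- `bind` and `flatMap` rewrites.
  have hmono : gaugeMono (2 * M + 1) L ω (fun j => (a j, b j, c j, d j)) x ξ =
      (l.map fun j => (G j).map (emb (2 * M + 1) L j)).prod := by
    simp only [gaugeMono, gaugeFactor_eq_map_gaugeLoc, hldef, List.map_map, hGdef,
      List.bind_eq_flatMap, List.pure_def, Function.comp_def, ← List.map_eq_flatMap]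
  have main := (prod_mulVec_baxVec G v
    (fun j => gaugeLoc_one_zero_mulVec (hnd j).1 (hnd j).2.2 (hv j).2) l hl v
    (fun _ _ => rfl)).2
  simp only [hmem, if_true] at main
  rw [hmono, main, main, DeltaMinus, DeltaPlus, ← baxVec_smul, ← baxVec_smul]
  constructor
  · congr 1
    funext j
    exact gaugeLoc_zero_zero_mulVec hω1 hq2 hq0 (hnd j).1 (hnd j).2.2 (hv j).1 (hv j).2
      (hwm j).1 (hwm j).2
  · congr 1
    funext j
    exact gaugeLoc_one_one_mulVec hω1 hq2 hq0 (hnd j).1 (hnd j).2.1 (hnd j).2.2 (hv j).1 (hv j).2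
      (hwp j).1 (hwp j).2

end
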